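/- Let $\Gamma = H \times \Gamma_0$ with the product-structure kernel assumption and positivity $P_H(h,B)>0$. Let $\mu$ be a probability measure on $\Gamma\times\Gamma$ with $D(\mu\Vert\mu^P) < \infty$. Then $\sup_{G\in\mathcal{A}_0} |\mu^P(G)-\mu(G)| \le \frac{1}{\sqrt 2}\bigl(D(\mu\Vert\mu^P) - D_\Delta(\mu\Vert\mu^P)\bigr)^{1/2}$, where $\mathcal{A}_0 = \mathcal{B}_0'\otimes\mathcal{B}_1'$, $\Delta = \{A_h\times B : h\in H, B\in\Lambda_1\}$ is the finite partition of $\Gamma\times\Gamma$, and $D_\Delta(\mu\Vert\mu^P) = \sum_{A_h\times B\in\Delta}\mu(A_h\times B)\log\frac{\mu(A_h\times B)}{\mu^P(A_h\times B)}$. -/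

import Mathlib

open MeasureTheory ProbabilityTheory
open scoped Classical

/-- The relative entropy (Kullback-Leibler divergence) of `μ` with respect to `ρ`,
as an extended real number: it equals `∫ log (dμ/dρ) dμ` when `μ ≪ ρ` and this
integral is well defined, and `+∞` otherwise. -/
noncomputable def relEnt {Ω : Type*} [MeasurableSpace Ω] (μ ρ : Measure Ω) : EReal :=
  if μ ≪ ρ ∧ Integrable (fun x => Real.log (μ.rnDeriv ρ x).toReal) μ
  then ((∫ x, Real.log (μ.rnDeriv ρ x).toReal ∂μ : ℝ) : EReal)
  else ⊤

/-!
Let `ν` be the measure obtained from `μ^P` by giving each cell `A_h × B` of `Δ` the mass it has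
under `μ`, without changing the conditional laws given the cells. The density `dν/dμ^P` is constant
on cells, so `D(μ‖ν) = D(μ‖μ^P) - D_Δ(μ‖μ^P)`, and Pinsker's inequality bounds `|ν(G) - μ(G)|` by
`√(D(μ‖ν) / 2)`. Finally `ν = μ^P` on `𝒜₀`: by the product structure, `Γ × B` and `G ∈ 𝒜₀` are
`μ^P`-independent given `A_h × Γ`, so `μ^P(G | A_h × B) = μ^P(G | A_h × Γ)`, and `μ` and `μ^P` give
`A_h × Γ` the same mass.
-/

open InformationTheory
open scoped ENNReal NNReal

section Entropy

variable {Ω : Type*} [MeasurableSpace Ω]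

theorem relEnt_ne_top_iff_klDiv_ne_top {μ ρ : Measure Ω} : relEnt μ ρ ≠ ⊤ ↔ klDiv μ ρ ≠ ∞ := by
  rw [klDiv_ne_top_iff, relEnt, llr_def]
  split_ifs with h <;> simp [h]

theorem toReal_relEnt {μ ρ : Measure Ω} [IsProbabilityMeasure μ] [IsProbabilityMeasure ρ]
    (h : klDiv μ ρ ≠ ∞) : (relEnt μ ρ).toReal = (klDiv μ ρ).toReal := by
  have hfin := klDiv_ne_top_iff.1 h
  rw [toReal_klDiv_of_measure_eq hfin.1 (by simp), llr_def, relEnt, if_pos (by rwa [← llr_def]),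
    EReal.toReal_coe]

theorem llr_ae_eq_add {μ ν κ : Measure Ω} [SigmaFinite μ] [SigmaFinite ν] [SigmaFinite κ]
    (hμν : μ ≪ ν) (hνκ : ν ≪ κ) : llr μ κ =ᵐ[μ] llr μ ν + llr ν κ := by
  have hμκ := hμν.trans hνκ
  filter_upwards [hμκ.ae_le (Measure.rnDeriv_mul_rnDeriv hμν (κ := κ)), Measure.rnDeriv_pos hμκ,
    hμκ.ae_le (Measure.rnDeriv_lt_top μ κ)] with x hmul hpos htop
  have hne : (μ.rnDeriv ν x).toReal * (ν.rnDeriv κ x).toReal ≠ 0 := by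
    rw [← ENNReal.toReal_mul, ← Pi.mul_apply, hmul]
    exact (ENNReal.toReal_pos hpos.ne' htop.ne).ne'
  simp only [llr, Pi.add_apply, ← hmul, Pi.mul_apply, ENNReal.toReal_mul]
  exact Real.log_mul (left_ne_zero_of_mul hne) (right_ne_zero_of_mul hne)

variable {μ ν : Measure Ω} [IsProbabilityMeasure μ] [IsProbabilityMeasure ν]

/- The Donsker-Varadhan inequality, obtained from `0 ≤ D(μ‖ν_f)` for the tilted measure
`ν_f = exp f • ν / ∫ exp f dν`. -/
theorem integral_le_toReal_klDiv_add_log_integral_exp (h : klDiv μ ν ≠ ∞) {f : Ω → ℝ}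
    (hfμ : Integrable f μ) (hfν : Integrable (fun x ↦ Real.exp (f x)) ν) :
    ∫ x, f x ∂μ ≤ (klDiv μ ν).toReal + Real.log (∫ x, Real.exp (f x) ∂ν) := by
  obtain ⟨hac, hint⟩ := klDiv_ne_top_iff.1 h
  have := isProbabilityMeasure_tilted hfν
  have hnonneg := integral_llr_add_sub_measure_univ_nonneg
    (hac.trans (absolutelyContinuous_tilted hfν)) (integrable_llr_tilted_right hac hfμ hint hfν)
  rw [integral_llr_tilted_right hac hfμ hfν hint, probReal_univ, probReal_univ] at hnonneg
  rw [toReal_klDiv_of_measure_eq hac (by simp)]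
  linarith

theorem abs_integral_le_sqrt_klDiv_of_hasSubgaussianMGF (h : klDiv μ ν ≠ ∞) {X : Ω → ℝ} {c : ℝ≥0}
    (hX : HasSubgaussianMGF X c ν) (hXμ : Integrable X μ) :
    |∫ x, X x ∂μ| ≤ √(2 * c * (klDiv μ ν).toReal) := by
  have hquad (t : ℝ) :
      0 ≤ (c / 2 : ℝ) * (t * t) + (-∫ x, X x ∂μ) * t + (klDiv μ ν).toReal := by
    have hDV := integral_le_toReal_klDiv_add_log_integral_exp h (hXμ.const_mul t)
      (hX.integrable_exp_mul t)
    have hcgf : Real.log (∫ x, Real.exp (t * X x) ∂ν) ≤ c * t ^ 2 / 2 := hX.cgf_le t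
    rw [integral_const_mul] at hDV
    linarith
  have hdiscrim := discrim_le_zero hquad
  apply Real.abs_le_sqrt
  rw [discrim] at hdiscrim
  linarith

theorem hasSubgaussianMGF_indicator_sub_measureReal {G : Set Ω} (hG : MeasurableSet G) :
    HasSubgaussianMGF (fun x ↦ G.indicator 1 x - ν.real G) (1 / 4) ν := by
  have hHoeffding := hasSubgaussianMGF_of_mem_Icc (μ := ν) (X := G.indicator (1 : Ω → ℝ))
    (a := 0) (b := 1) (measurable_one.indicator hG).aemeasurable
    (ae_of_all _ fun x ↦ by by_cases hx : x ∈ G <;> simp [hx])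
  rw [integral_indicator_one hG] at hHoeffding
  convert hHoeffding using 1
  norm_num

theorem abs_measureReal_sub_le_sqrt_klDiv (h : klDiv μ ν ≠ ∞) {G : Set Ω} (hG : MeasurableSet G) :
    |ν.real G - μ.real G| ≤ √((klDiv μ ν).toReal / 2) := by
  have hint : Integrable (G.indicator (1 : Ω → ℝ)) μ :=
    (integrable_const (1 : ℝ)).indicator hG
  have hbound := abs_integral_le_sqrt_klDiv_of_hasSubgaussianMGF h
    (hasSubgaussianMGF_indicator_sub_measureReal hG) (hint.sub (integrable_const (ν.real G)))
  rw [integral_sub hint (integrable_const _), integral_indicator_one hG, integral_const,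
    probReal_univ, one_smul, abs_sub_comm] at hbound
  refine hbound.trans_eq (congrArg _ ?_)
  push_cast
  ring

end Entropy

/-- The family `s`, restricted to the finite index set `I`, is a partition of `Ω` into measurable
cells. Empty cells are allowed. -/
structure IsMeasurablePartition {Ω ι : Type*} [MeasurableSpace Ω] (I : Finset ι)
    (s : ι → Set Ω) : Prop where
  measurableSet : ∀ i ∈ I, MeasurableSet (s i)
  pairwiseDisjoint : (I : Set ι).PairwiseDisjoint s
  iUnion_eq_univ : ⋃ i ∈ I, s i = Set.univ

theorem isMeasurablePartition_id {Ω : Type*} [MeasurableSpace Ω] {Λ : Finset (Set Ω)}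
    (hmeas : ∀ B ∈ Λ, MeasurableSet B) (hdisj : (Λ : Set (Set Ω)).Pairwise Disjoint)
    (hcover : ⋃₀ (Λ : Set (Set Ω)) = Set.univ) : IsMeasurablePartition Λ id :=
  ⟨hmeas, hdisj, by rw [← hcover, Set.sUnion_eq_biUnion]; rfl⟩

theorem isMeasurablePartition_fiber {Ω ι : Type*} [MeasurableSpace Ω] [Fintype ι]
    [MeasurableSpace ι] [MeasurableSingletonClass ι] {f : Ω → ι} (hf : Measurable f) :
    IsMeasurablePartition Finset.univ fun i ↦ f ⁻¹' {i} where
  measurableSet i _ := hf (measurableSet_singleton i)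
  pairwiseDisjoint := Set.pairwiseDisjoint_fiber f _
  iUnion_eq_univ := by ext; simp

namespace IsMeasurablePartition

variable {Ω Ω' ι κ : Type*} [MeasurableSpace Ω] [MeasurableSpace Ω'] {I : Finset ι} {J : Finset κ}
  {s : ι → Set Ω} {t : κ → Set Ω'}

theorem exists_mem (hs : IsMeasurablePartition I s) (x : Ω) : ∃ i ∈ I, x ∈ s i := by
  simpa only [Set.mem_iUnion, exists_prop] using hs.iUnion_eq_univ.ge (Set.mem_univ x)

theorem preimage (ht : IsMeasurablePartition J t) {f : Ω → Ω'} (hf : Measurable f) :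
    IsMeasurablePartition J fun j ↦ f ⁻¹' t j where
  measurableSet j hj := hf (ht.measurableSet j hj)
  pairwiseDisjoint _ hj _ hj' hne := (ht.pairwiseDisjoint hj hj' hne).preimage f
  iUnion_eq_univ := by rw [← Set.preimage_iUnion₂, ht.iUnion_eq_univ, Set.preimage_univ]

theorem prod (hs : IsMeasurablePartition I s) (ht : IsMeasurablePartition J t) :
    IsMeasurablePartition (I ×ˢ J) fun p ↦ s p.1 ×ˢ t p.2 where
  measurableSet p hp :=
    (hs.measurableSet _ (Finset.mem_product.1 hp).1).prod
      (ht.measurableSet _ (Finset.mem_product.1 hp).2)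
  pairwiseDisjoint := by
    simpa only [Finset.coe_product] using hs.pairwiseDisjoint.prod ht.pairwiseDisjoint
  iUnion_eq_univ := by
    refine Set.eq_univ_of_forall fun x ↦ ?_
    obtain ⟨i, hi, hxi⟩ := hs.exists_mem x.1
    obtain ⟨j, hj, hxj⟩ := ht.exists_mem x.2
    exact Set.mem_biUnion (Finset.mk_mem_product hi hj) ⟨hxi, hxj⟩

theorem sum_measure_inter (hs : IsMeasurablePartition I s) (μ : Measure Ω) (A : Set Ω) :
    ∑ i ∈ I, μ (s i ∩ A) = μ A := by
  rw [← Measure.restrict_apply_univ A, ← hs.iUnion_eq_univ,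
    measure_biUnion_finset hs.pairwiseDisjoint hs.measurableSet]
  exact Finset.sum_congr rfl fun i hi ↦ (Measure.restrict_apply (hs.measurableSet i hi)).symm

theorem sum_measure (hs : IsMeasurablePartition I s) (μ : Measure Ω) :
    ∑ i ∈ I, μ (s i) = μ Set.univ := by
  simpa only [Set.inter_univ] using hs.sum_measure_inter μ Set.univ

theorem sum_indicator_apply_of_mem (hs : IsMeasurablePartition I s) {M : Type*} [AddCommMonoid M]
    (c : ι → M) {i : ι} (hi : i ∈ I) {x : Ω} (hx : x ∈ s i) :
    ∑ j ∈ I, (s j).indicator (fun _ ↦ c j) x = c i := by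
  rw [Finset.sum_eq_single_of_mem i hi, Set.indicator_of_mem hx]
  exact fun j hj hji ↦ Set.indicator_of_notMem
    (fun hxj ↦ Set.disjoint_left.1 (hs.pairwiseDisjoint hj hi hji) hxj hx) _

end IsMeasurablePartition

/-- The measure that gives each cell `s i`, `i ∈ I`, the mass it has under `μ`, and has the same
conditional laws given the cells as `Q`. Cells that are null for `Q` contribute nothing, as
`Q[|s i] = 0` there. -/
noncomputable def condMixture {Ω ι : Type*} [MeasurableSpace Ω] (I : Finset ι) (s : ι → Set Ω)
    (μ Q : Measure Ω) : Measure Ω :=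
  ∑ i ∈ I, μ (s i) • Q[|s i]

section CondMixture

variable {Ω ι : Type*} [MeasurableSpace Ω] {I : Finset ι} {s : ι → Set Ω} {μ Q : Measure Ω}

theorem condMixture_apply (A : Set Ω) :
    condMixture I s μ Q A = ∑ i ∈ I, μ (s i) * Q[A | s i] := by
  simp only [condMixture, Measure.finsetSum_apply, Measure.smul_apply, smul_eq_mul]

theorem condMixture_absolutelyContinuous : condMixture I s μ Q ≪ Q := by
  intro A hA
  simp [condMixture_apply, cond_absolutelyContinuous hA]

theorem absolutelyContinuous_condMixture [IsFiniteMeasure Q] (hs : IsMeasurablePartition I s)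
    (hμQ : μ ≪ Q) : μ ≪ condMixture I s μ Q := by
  intro A hA
  rw [condMixture_apply, Finset.sum_eq_zero_iff] at hA
  rw [← hs.sum_measure_inter]
  refine Finset.sum_eq_zero fun i hi ↦ ?_
  obtain hμi | hQi := mul_eq_zero.1 (hA i hi)
  · exact measure_mono_null Set.inter_subset_left hμi
  · apply hμQ
    rw [← cond_mul_eq_inter (hs.measurableSet i hi), hQi, zero_mul]

theorem isProbabilityMeasure_condMixture [IsProbabilityMeasure μ] [IsFiniteMeasure Q]
    (hs : IsMeasurablePartition I s) (hμQ : μ ≪ Q) :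
    IsProbabilityMeasure (condMixture I s μ Q) := by
  constructor
  rw [condMixture_apply, ← measure_univ (μ := μ), ← hs.sum_measure]
  refine Finset.sum_congr rfl fun i _ ↦ ?_
  by_cases hμi : μ (s i) = 0
  · rw [hμi, zero_mul]
  · have := cond_isProbabilityMeasure (μ := Q) fun hQi ↦ hμi (hμQ hQi)
    rw [measure_univ, mul_one]

theorem condMixture_eq_withDensity (hs : IsMeasurablePartition I s) :
    condMixture I s μ Q =
      Q.withDensity fun x ↦ ∑ i ∈ I, (s i).indicator (fun _ ↦ μ (s i) / Q (s i)) x := by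
  ext A hA
  rw [condMixture_apply, withDensity_apply _ hA, lintegral_finsetSum' _ fun i hi ↦
    (measurable_const.indicator (hs.measurableSet i hi)).aemeasurable]
  refine Finset.sum_congr rfl fun i hi ↦ ?_
  have hsi := hs.measurableSet i hi
  rw [lintegral_indicator_const hsi, Measure.restrict_apply hsi, cond_apply hsi, div_eq_mul_inv,
    mul_assoc]

theorem llr_condMixture_ae_eq [SigmaFinite Q] (hs : IsMeasurablePartition I s) :
    llr (condMixture I s μ Q) Q =ᵐ[Q] fun x ↦
      ∑ i ∈ I, (s i).indicator (fun _ ↦ Real.log (μ.real (s i) / Q.real (s i))) x := by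
  have hdensity := Measure.rnDeriv_withDensity Q <| Finset.measurable_fun_sum I fun i hi ↦
    (measurable_const (a := μ (s i) / Q (s i))).indicator (hs.measurableSet i hi)
  rw [← condMixture_eq_withDensity hs] at hdensity
  filter_upwards [hdensity] with x hx
  obtain ⟨i, hi, hxi⟩ := hs.exists_mem x
  rw [llr, hx, hs.sum_indicator_apply_of_mem _ hi hxi, hs.sum_indicator_apply_of_mem _ hi hxi,
    ENNReal.toReal_div, measureReal_def, measureReal_def]

variable [IsProbabilityMeasure μ] [IsProbabilityMeasure Q]

theorem klDiv_condMixture (hs : IsMeasurablePartition I s) (h : klDiv μ Q ≠ ∞) :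
    klDiv μ (condMixture I s μ Q) ≠ ∞ ∧ (klDiv μ (condMixture I s μ Q)).toReal =
      (klDiv μ Q).toReal - ∑ i ∈ I, μ.real (s i) * Real.log (μ.real (s i) / Q.real (s i)) := by
  obtain ⟨hμQ, hint⟩ := klDiv_ne_top_iff.1 h
  have hμν := absolutelyContinuous_condMixture hs hμQ
  have := isProbabilityMeasure_condMixture hs hμQ
  have hcell (i) (hi : i ∈ I) : Integrable
      ((s i).indicator fun _ ↦ Real.log (μ.real (s i) / Q.real (s i))) μ :=
    (integrable_const _).indicator (hs.measurableSet i hi)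
  have hllr : llr μ (condMixture I s μ Q) =ᵐ[μ] fun x ↦ llr μ Q x -
      ∑ i ∈ I, (s i).indicator (fun _ ↦ Real.log (μ.real (s i) / Q.real (s i))) x := by
    filter_upwards [llr_ae_eq_add hμν condMixture_absolutelyContinuous,
      hμQ.ae_le (llr_condMixture_ae_eq hs)] with x hchain hcells
    rw [hchain, Pi.add_apply, hcells, add_sub_cancel_right]
  refine ⟨klDiv_ne_top hμν ((hint.sub (integrable_finsetSum I hcell)).congr hllr.symm), ?_⟩
  rw [toReal_klDiv_of_measure_eq hμν (by simp), toReal_klDiv_of_measure_eq hμQ (by simp),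
    integral_congr_ae hllr, integral_sub hint (integrable_finsetSum I hcell),
    integral_finsetSum I hcell]
  exact congrArg _ <| Finset.sum_congr rfl fun i hi ↦ by
    rw [integral_indicator_const _ (hs.measurableSet i hi), smul_eq_mul]

theorem abs_condMixture_real_sub_le_sqrt (hs : IsMeasurablePartition I s) (h : klDiv μ Q ≠ ∞)
    {G : Set Ω} (hG : MeasurableSet G) :
    |(condMixture I s μ Q).real G - μ.real G| ≤ √(((klDiv μ Q).toReal -
      ∑ i ∈ I, μ.real (s i) * Real.log (μ.real (s i) / Q.real (s i))) / 2) := by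
  have := isProbabilityMeasure_condMixture hs (klDiv_ne_top_iff.1 h).1
  obtain ⟨hfin, hkl⟩ := klDiv_condMixture hs h
  exact hkl ▸ abs_measureReal_sub_le_sqrt_klDiv hfin hG

end CondMixture

theorem measure_eq_of_forall_measure_inter_eq_mul {Ω ι : Type*} [MeasurableSpace Ω] {I : Finset ι}
    {s : ι → Set Ω} (hs : IsMeasurablePartition I s) {μ : Measure Ω} {A : Set Ω} {p : ι → ℝ≥0∞}
    {q : ℝ≥0∞} (hp : ∑ i ∈ I, p i = 1) (h : ∀ i ∈ I, μ (s i ∩ A) = p i * q) : μ A = q := by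
  rw [← hs.sum_measure_inter, Finset.sum_congr rfl h, ← Finset.sum_mul, hp, one_mul]

section Kernel

variable {X Y : Type*} {𝓑 : MeasurableSpace Y} [mX : MeasurableSpace X] [mY : MeasurableSpace Y]
  {P : Kernel X Y} {G : Set (X × Y)}

theorem measurableSet_of_measurableSet_prod (h𝓑 : 𝓑 ≤ mY) (hG : MeasurableSet[mX.prod 𝓑] G) :
    MeasurableSet G :=
  sup_le_sup_left (MeasurableSpace.comap_mono h𝓑) _ G hG

theorem compProd_prod_inter_eq_mul [IsSFiniteKernel P] (h𝓑 : 𝓑 ≤ mY) {m : Measure X} [SFinite m]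
    {A : Set X} {B : Set Y} (hA : MeasurableSet A) (hB : MeasurableSet B) {p : ℝ≥0∞}
    (hprod : ∀ x ∈ A, ∀ C, MeasurableSet[𝓑] C → P x (B ∩ C) = p * P x C)
    (hG : MeasurableSet[mX.prod 𝓑] G) :
    (m ⊗ₘ P) (A ×ˢ B ∩ G) = p * (m ⊗ₘ P) (Prod.fst ⁻¹' A ∩ G) := by
  have hGmeas := measurableSet_of_measurableSet_prod h𝓑 hG
  have hstrip := (measurable_fst hA).inter hGmeas
  rw [Measure.compProd_apply ((hA.prod hB).inter hGmeas), Measure.compProd_apply hstrip,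
    ← lintegral_const_mul _ (Kernel.measurable_kernel_prodMk_left hstrip)]
  refine lintegral_congr fun x ↦ ?_
  by_cases hx : x ∈ A
  · have hsection : MeasurableSet[𝓑] (Prod.mk x ⁻¹' G) := @measurable_prodMk_left X Y _ 𝓑 x G hG
    simpa [Set.mk_preimage_prod_right hx, Set.preimage_preimage, hx] using hprod x hx _ hsection
  · simp [Set.mk_preimage_prod_right_eq_empty hx, Set.preimage_preimage, hx]

theorem cond_compProd_prod_eq [IsFiniteKernel P] (h𝓑 : 𝓑 ≤ mY) {m : Measure X} [IsFiniteMeasure m]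
    {A : Set X} {B : Set Y} (hA : MeasurableSet A) (hB : MeasurableSet B) {p : ℝ≥0∞}
    (hprod : ∀ x ∈ A, ∀ C, MeasurableSet[𝓑] C → P x (B ∩ C) = p * P x C)
    (hAB : (m ⊗ₘ P) (A ×ˢ B) ≠ 0) (hG : MeasurableSet[mX.prod 𝓑] G) :
    (m ⊗ₘ P)[G | A ×ˢ B] = (m ⊗ₘ P)[G | Prod.fst ⁻¹' A] := by
  have hcell : (m ⊗ₘ P) (A ×ˢ B) = p * (m ⊗ₘ P) (Prod.fst ⁻¹' A) := by
    simpa only [Set.inter_univ] using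
      compProd_prod_inter_eq_mul h𝓑 hA hB hprod (@MeasurableSet.univ _ (mX.prod 𝓑))
  have hp : p ≠ 0 := left_ne_zero_of_mul (hcell ▸ hAB)
  have hp_top : p ≠ ∞ := by
    rintro rfl
    refine measure_ne_top (m ⊗ₘ P) (A ×ˢ B) (hcell.trans (ENNReal.top_mul ?_))
    exact right_ne_zero_of_mul (hcell ▸ hAB)
  rw [cond_apply (hA.prod hB), cond_apply (measurable_fst hA),
    compProd_prod_inter_eq_mul h𝓑 hA hB hprod hG, hcell, ← ENNReal.div_eq_inv_mul,
    ← ENNReal.div_eq_inv_mul, ENNReal.mul_div_mul_left _ _ hp hp_top]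

variable {ι κ : Type*} {I : Finset ι} {J : Finset κ} {s : ι → Set X} {t : κ → Set Y}

theorem condMixture_compProd_apply [IsMarkovKernel P] (hs : IsMeasurablePartition I s)
    (ht : IsMeasurablePartition J t) (h𝓑 : 𝓑 ≤ mY) {p : ι → κ → ℝ≥0∞}
    (hprod : ∀ i ∈ I, ∀ x ∈ s i, ∀ j ∈ J, ∀ C, MeasurableSet[𝓑] C →
      P x (t j ∩ C) = p i j * P x C)
    {μ : Measure (X × Y)} [IsFiniteMeasure μ] (hμ : μ ≪ μ.fst ⊗ₘ P)
    (hG : MeasurableSet[mX.prod 𝓑] G) :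
    condMixture (I ×ˢ J) (fun c ↦ s c.1 ×ˢ t c.2) μ (μ.fst ⊗ₘ P) G = (μ.fst ⊗ₘ P) G := by
  have hcell (i) (hi : i ∈ I) (j) (hj : j ∈ J) :
      μ (s i ×ˢ t j) * (μ.fst ⊗ₘ P)[G | s i ×ˢ t j] =
        μ (s i ×ˢ t j) * (μ.fst ⊗ₘ P)[G | Prod.fst ⁻¹' s i] := by
    by_cases hQ : (μ.fst ⊗ₘ P) (s i ×ˢ t j) = 0
    · rw [hμ hQ, zero_mul, zero_mul]
    · rw [cond_compProd_prod_eq h𝓑 (hs.measurableSet i hi) (ht.measurableSet j hj)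
        (fun x hx ↦ hprod i hi x hx j hj) hQ hG]
  have hrow (i) : ∑ j ∈ J, μ (s i ×ˢ t j) = μ (Prod.fst ⁻¹' s i) := by
    simpa only [Set.prod_eq, Set.inter_comm] using
      (ht.preimage measurable_snd).sum_measure_inter μ (Prod.fst ⁻¹' s i)
  have hstrip (i) (hi : i ∈ I) : μ (Prod.fst ⁻¹' s i) = (μ.fst ⊗ₘ P) (Prod.fst ⁻¹' s i) := by
    have hsi := hs.measurableSet i hi
    rw [← Measure.fst_apply hsi, ← Measure.fst_apply hsi, Measure.fst_compProd]
  calc condMixture (I ×ˢ J) (fun c ↦ s c.1 ×ˢ t c.2) μ (μ.fst ⊗ₘ P) G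
      = ∑ i ∈ I, ∑ j ∈ J, μ (s i ×ˢ t j) * (μ.fst ⊗ₘ P)[G | s i ×ˢ t j] := by
        rw [condMixture_apply, Finset.sum_product]
    _ = ∑ i ∈ I, μ (Prod.fst ⁻¹' s i) * (μ.fst ⊗ₘ P)[G | Prod.fst ⁻¹' s i] := by
        refine Finset.sum_congr rfl fun i hi ↦ ?_
        rw [Finset.sum_congr rfl (hcell i hi), ← Finset.sum_mul, hrow]
    _ = ∑ i ∈ I, (μ.fst ⊗ₘ P) (Prod.fst ⁻¹' s i ∩ G) := by
        refine Finset.sum_congr rfl fun i hi ↦ ?_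
        rw [hstrip i hi, mul_comm, cond_mul_eq_inter (measurable_fst (hs.measurableSet i hi))]
    _ = (μ.fst ⊗ₘ P) G := (hs.preimage measurable_fst).sum_measure_inter _ G

theorem stmt_8_general [IsMarkovKernel P] (hs : IsMeasurablePartition I s)
    (ht : IsMeasurablePartition J t) (h𝓑 : 𝓑 ≤ mY) {p : ι → κ → ℝ≥0∞}
    (hprod : ∀ i ∈ I, ∀ x ∈ s i, ∀ j ∈ J, ∀ C, MeasurableSet[𝓑] C →
      P x (t j ∩ C) = p i j * P x C)
    {μ : Measure (X × Y)} [IsProbabilityMeasure μ] (hfin : relEnt μ (μ.fst ⊗ₘ P) ≠ ⊤)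
    (hG : MeasurableSet[mX.prod 𝓑] G) :
    |(μ.fst ⊗ₘ P).real G - μ.real G| ≤ √(((relEnt μ (μ.fst ⊗ₘ P)).toReal -
      ∑ i ∈ I, ∑ j ∈ J, μ.real (s i ×ˢ t j) *
        Real.log (μ.real (s i ×ˢ t j) / (μ.fst ⊗ₘ P).real (s i ×ˢ t j))) / 2) := by
  have hkl := relEnt_ne_top_iff_klDiv_ne_top.1 hfin
  have hmixture := condMixture_compProd_apply hs ht h𝓑 hprod (klDiv_ne_top_iff.1 hkl).1 hG
  have hbound := abs_condMixture_real_sub_le_sqrt (hs.prod ht) hkl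
    (measurableSet_of_measurableSet_prod h𝓑 hG)
  rwa [measureReal_def, hmixture, ← measureReal_def, ← toReal_relEnt hkl,
    Finset.sum_product] at hbound

end Kernel

/-- Proposition 3.4 of the paper: under the product-structure
assumption with positivity, if `D(μ‖μ^P) < ∞` then
`sup_{G ∈ 𝒜₀} |μ^P(G) - μ(G)| ≤ (1/√2) (D(μ‖μ^P) - D_Δ(μ‖μ^P))^{1/2}`,
where `Δ = {A_h × B : h ∈ H, B ∈ Λ₁}` and
`D_Δ(μ‖μ^P) = ∑_{A_h × B ∈ Δ} μ(A_h × B) log (μ(A_h × B) / μ^P(A_h × B))`. -/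
theorem stmt_8 {H Γ0 : Type*} [Fintype H] [Nonempty H]
    [MeasurableSpace H] [MeasurableSingletonClass H] [MeasurableSpace Γ0]
    (Λ₁ : Finset (Set (H × Γ0)))
    (hΛmeas : ∀ B ∈ Λ₁, MeasurableSet B)
    (hΛdisj : (Λ₁ : Set (Set (H × Γ0))).Pairwise Disjoint)
    (hΛcover : ⋃₀ (Λ₁ : Set (Set (H × Γ0))) = Set.univ)
    (P : Kernel (H × Γ0) (H × Γ0)) [IsMarkovKernel P]
    (PH : H → Set (H × Γ0) → ENNReal) (P0 : Γ0 → Set (H × Γ0) → ENNReal)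
    (hPHnorm : ∀ h : H, ∑ B ∈ Λ₁, PH h B = 1)
    (hP0norm : ∀ γ : Γ0, P0 γ Set.univ = 1)
    (hPHpos : ∀ (h : H), ∀ B ∈ Λ₁, 0 < PH h B)
    (μ : Measure ((H × Γ0) × (H × Γ0))) [IsProbabilityMeasure μ]
    (μL : Measure (H × Γ0)) (hμL : μL = μ.fst)
    (μP : Measure ((H × Γ0) × (H × Γ0))) (hμP : μP = μL.compProd P)
    (D : EReal) (hD : D = relEnt μ μP) (hfin : D ≠ ⊤)
    (DΔ : ℝ)
    (hDΔ : DΔ = ∑ h : H, ∑ B ∈ Λ₁, (μ ((Prod.fst ⁻¹' {h}) ×ˢ B)).toReal *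
        Real.log ((μ ((Prod.fst ⁻¹' {h}) ×ˢ B)).toReal / (μP ((Prod.fst ⁻¹' {h}) ×ˢ B)).toReal))
    (𝓑₁ : MeasurableSpace (H × Γ0))
    (h𝓑₁ : 𝓑₁ ≤ MeasurableSpace.comap Prod.snd inferInstance)
    (hprod : ∀ (x : H × Γ0), ∀ B ∈ Λ₁, ∀ C : Set (H × Γ0), MeasurableSet[𝓑₁] C →
      P x (B ∩ C) = PH x.1 B * P0 x.2 C) :
    ∀ G : Set ((H × Γ0) × (H × Γ0)),
      MeasurableSet[(MeasurableSpace.comap (Prod.snd : H × Γ0 → Γ0)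
          inferInstance).prod 𝓑₁] G →
      |(μP G).toReal - (μ G).toReal| ≤ Real.sqrt ((D.toReal - DΔ) / 2) := by
  -- keeps `𝓑₁` from being picked up as the instance on `H × Γ0`
  let _ : MeasurableSpace (H × Γ0) := Prod.instMeasurableSpace
  intro G hG
  subst hμL hμP hD hDΔ
  have hΛ := isMeasurablePartition_id hΛmeas hΛdisj hΛcover
  have h𝓑₁_le : 𝓑₁ ≤ Prod.instMeasurableSpace := h𝓑₁.trans measurable_snd.comap_le
  have hP0 (x : H × Γ0) (C) (hC : MeasurableSet[𝓑₁] C) : P x C = P0 x.2 C :=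
    measure_eq_of_forall_measure_inter_eq_mul hΛ (hPHnorm x.1) fun B hB ↦ hprod x B hB C hC
  refine stmt_8_general (isMeasurablePartition_fiber measurable_fst) hΛ h𝓑₁_le (p := PH) ?_ hfin
    (sup_le_sup_right (MeasurableSpace.comap_mono measurable_snd.comap_le) _ G hG)
  rintro _ - x rfl B hB C hC
  rw [hP0 x C hC]
  exact hprod x B hB C hC
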